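/- Let ι be a type of propositional variables, T_S a source theory, T_B a bridging theory, and V_A ⊆ ι a vocabulary. Suppose there exists a theory T' over V_A with T_B ∩ T_S = T_B ∩ T' (i.e., T_B entails the equivalence of T_S and T'). Then the tightest abstraction ⟨wsc(T_S;T_B;V_A), snc(T_S;T_B;V_A)⟩ is exact: T_B ∩ wsc(T_S;T_B;V_A) = T_B ∩ snc(T_S;T_B;V_A), and moreover both intersections equal T_B ∩ T'. (This is the semantic content of the exactness theorem for definitional bridging theories with proper covers, where replacing each covered pattern by its defined concept yields such a theory T' over V_A.) -/

import Mathlib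

def Agrees {ι : Type*} (W : Set ι) (w w' : ι → Bool) : Prop := ∀ i ∈ W, w i = w' i

def IsOver {ι : Type*} (T : Set (ι → Bool)) (W : Set ι) : Prop :=
  ∀ w w', Agrees W w w' → (w ∈ T ↔ w' ∈ T)

def snc {ι : Type*} (A T : Set (ι → Bool)) (W : Set ι) : Set (ι → Bool) :=
  {w | ∃ w', w' ∈ T ∧ w' ∈ A ∧ Agrees W w' w}

def wsc {ι : Type*} (A T : Set (ι → Bool)) (W : Set ι) : Set (ι → Bool) :=
  {w | ∀ w', Agrees W w w' → w' ∈ T → w' ∈ A}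

section

variable {ι : Type*} {A T X : Set (ι → Bool)} {W : Set ι}

theorem Agrees.refl (W : Set ι) (w : ι → Bool) : Agrees W w w := fun _ _ => rfl

theorem inter_subset_snc : T ∩ A ⊆ snc A T W :=
  fun w ⟨hwT, hwA⟩ => ⟨w, hwT, hwA, Agrees.refl W w⟩

theorem inter_wsc_subset : T ∩ wsc A T W ⊆ A :=
  fun w ⟨hwT, hw⟩ => hw w (Agrees.refl W w) hwT

namespace IsOver

theorem snc_subset_iff (hX : IsOver X W) : snc A T W ⊆ X ↔ T ∩ A ⊆ X :=
  ⟨inter_subset_snc.trans,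
    fun h w ⟨w', hT, hA, hagree⟩ => (hX w' w hagree).mp (h ⟨hT, hA⟩)⟩

theorem subset_wsc_iff (hX : IsOver X W) : X ⊆ wsc A T W ↔ T ∩ X ⊆ A :=
  ⟨fun h => (Set.inter_subset_inter_right T h).trans inter_wsc_subset,
    fun h w hw w' hagree hT => h ⟨hT, (hX w w' hagree).mp hw⟩⟩

theorem inter_snc_eq (hX : IsOver X W) (h : T ∩ A = T ∩ X) : T ∩ snc A T W = T ∩ X := by
  obtain ⟨hXA, hAX⟩ := Set.inter_eq_inter_iff_left.mp h
  have hsnc : snc A T W ⊆ X := hX.snc_subset_iff.mpr hAX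
  exact (Set.inter_subset_inter_right T hsnc).antisymm
    fun _ hw => ⟨hw.1, inter_subset_snc ⟨hw.1, hXA hw⟩⟩

theorem inter_wsc_eq (hX : IsOver X W) (h : T ∩ A = T ∩ X) : T ∩ wsc A T W = T ∩ X := by
  obtain ⟨hXA, hAX⟩ := Set.inter_eq_inter_iff_left.mp h
  have hwsc : X ⊆ wsc A T W := hX.subset_wsc_iff.mpr hXA
  exact Set.Subset.antisymm (fun _ hw => ⟨hw.1, hAX ⟨hw.1, inter_wsc_subset hw⟩⟩)
    (Set.inter_subset_inter_right T hwsc)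

end IsOver

end

theorem exactness_of_tightest_abstraction {ι : Type*}
    (TS TB T' : Set (ι → Bool)) (VA : Set ι)
    (hT' : IsOver T' VA) (heq : TB ∩ TS = TB ∩ T') :
    TB ∩ wsc TS TB VA = TB ∩ snc TS TB VA ∧
    TB ∩ wsc TS TB VA = TB ∩ T' ∧
    TB ∩ snc TS TB VA = TB ∩ T' := by
  have hwsc := hT'.inter_wsc_eq heq
  have hsnc := hT'.inter_snc_eq heq
  exact ⟨hwsc.trans hsnc.symm, hwsc, hsnc⟩
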